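/- For every constant γ > 0 there is a constant C > 0 (depending only on γ) such that for all integers m, d ≥ 2 with m ≥ γ·d, a jittered sampling point set P of N = m^d points in [0,1)^d satisfies E[D*(P)] ≥ C · d · m^((d−1)/2). -/

import Mathlib

open MeasureTheory ProbabilityTheory Real

noncomputable section

/-- The axis-aligned cube `∏_i [x_i/m, x_i/m + 1/m)` of the `m`-grid partition of `[0,1)^d`. -/
def jitterCube (m d : ℕ) (x : Fin d → Fin m) : Set (Fin d → ℝ) :=
  Set.univ.pi fun i => Set.Ico ((x i : ℝ) / m) ((x i : ℝ) / m + 1 / m)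

/-- The distribution of a jittered sampling point configuration: independently, one point
uniformly distributed in each of the `m^d` cubes. -/
def jitterMeasure (m d : ℕ) : Measure ((Fin d → Fin m) → (Fin d → ℝ)) :=
  Measure.pi fun x => ((m : ENNReal) ^ d) • volume.restrict (jitterCube m d x)

open scoped Classical in
/-- Signed (non-normalized) discrepancy `|P ∩ A| - N·λ(A)` with `N = m^d` of a point
configuration `P`. -/
def jdisc (m d : ℕ) (P : (Fin d → Fin m) → (Fin d → ℝ)) (A : Set (Fin d → ℝ)) : ℝ :=
  ((Finset.univ.filter fun x => P x ∈ A).card : ℝ) - (m : ℝ) ^ d * (volume A).toReal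

/-- The anchored box `[0,y) = ∏_i [0, y_i)`. -/
def anchoredBox (d : ℕ) (y : Fin d → ℝ) : Set (Fin d → ℝ) :=
  Set.univ.pi fun i => Set.Ico 0 (y i)

/-- The (non-normalized) star discrepancy `D*(P) = sup_{y ∈ [0,1)^d} |disc([0,y))|`. -/
def starDisc (m d : ℕ) (P : (Fin d → Fin m) → (Fin d → ℝ)) : ℝ :=
  ⨆ y : {y : Fin d → ℝ // ∀ i, y i ∈ Set.Ico (0 : ℝ) 1}, |jdisc m d P (anchoredBox d y.1)|

/-- The expected star discrepancy of a jittered sampling point set of `m^d` points. -/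
def expStarDisc (m d : ℕ) : ℝ :=
  ∫ P, starDisc m d P ∂(jitterMeasure m d)


/-- Integrating a product where one factor depends only on coordinate `x` and has mean zero, and
the other does not depend on it. -/
lemma integral_mul_coord_eq_zero {ι α : Type*} [Fintype ι] [DecidableEq ι] [MeasurableSpace α]
    [Inhabited α] (μ : ι → Measure α) [∀ i, IsProbabilityMeasure (μ i)] (x : ι)
    (F : (ι → α) → ℝ) (hF : Measurable F)
    (hinv : ∀ P Q : ι → α, (∀ y, y ≠ x → P y = Q y) → F P = F Q)
    (g : α → ℝ) (hg : Measurable g) (h0 : ∫ a, g a ∂μ x = 0) :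
    ∫ P, F P * g (P x) ∂Measure.pi μ = 0 := by
  have h1 : iIndepFun (fun i (P : ι → α) => P i) (Measure.pi μ) :=
    iIndepFun_pi (X := fun _ a => a) (fun i => aemeasurable_id)
  have h2 := h1.indepFun_finset (Finset.univ.erase x) {x}
    (by simp) (fun i => measurable_pi_apply i)
  let φ : ({i // i ∈ (Finset.univ : Finset ι).erase x} → α) → ℝ := fun z =>
    F (fun i => if h : i ∈ Finset.univ.erase x then z ⟨i, h⟩ else default)
  let ψ : ({i // i ∈ ({x} : Finset ι)} → α) → ℝ := fun z => g (z ⟨x, by simp⟩)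
  have hφ : Measurable φ := by
    apply hF.comp
    rw [measurable_pi_iff]
    intro i
    by_cases h : i ∈ Finset.univ.erase x
    · simp only [h, dite_true]; exact measurable_pi_apply _
    · simp only [h, dite_false]; exact measurable_const
  have hψ : Measurable ψ := hg.comp (measurable_pi_apply _)
  have h3 := h2.comp hφ hψ
  have e1 : (φ ∘ fun P (i : {i // i ∈ (Finset.univ : Finset ι).erase x}) => P i) = F := by
    funext P
    apply hinv
    intro y hy
    simp [hy]
  have e2 : (ψ ∘ fun P (i : {i // i ∈ ({x} : Finset ι)}) => P i) = fun P : ι → α => g (P x) := rfl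
  rw [e1, e2] at h3
  have h4 := h3.integral_fun_mul_eq_mul_integral hF.aestronglyMeasurable
    (hg.comp (measurable_pi_apply x)).aestronglyMeasurable
  have h5 : ∫ P, g (P x) ∂Measure.pi μ = 0 := by
    rw [← h0]
    have := (measurePreserving_eval μ x).map_eq
    rw [← this, integral_map (measurable_pi_apply x).aemeasurable hg.aestronglyMeasurable]
  rw [h4, h5, mul_zero]

lemma integrable_of_bdd {Ω : Type*} [MeasurableSpace Ω] (μ : Measure Ω) [IsProbabilityMeasure μ]
    (f : Ω → ℝ) (hf : Measurable f) (C : ℝ) (h : ∀ a, |f a| ≤ C) : Integrable f μ :=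
  Integrable.of_bound hf.aestronglyMeasurable C (Filter.Eventually.of_forall (by simpa using h))

/-- Moments of a sum of independent centred signs of size `1/2`. -/
lemma moments {ι α : Type*} [Fintype ι] [DecidableEq ι] [MeasurableSpace α]
    [Inhabited α] (μ : ι → Measure α) [∀ i, IsProbabilityMeasure (μ i)]
    (g : α → ℝ) (hg : Measurable g) (hsq : ∀ a, g a ^ 2 = 1 / 4) (s : Finset ι)
    (h0 : ∀ x ∈ s, ∫ a, g a ∂μ x = 0) :
    (∫ P, (∑ x ∈ s, g (P x)) ∂Measure.pi μ = 0) ∧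
    (∫ P, (∑ x ∈ s, g (P x)) ^ 2 ∂Measure.pi μ = s.card / 4) ∧
    (∫ P, (∑ x ∈ s, g (P x)) ^ 4 ∂Measure.pi μ ≤ 3 * (s.card : ℝ) ^ 2 / 16) := by
  have habs : ∀ a, |g a| ≤ 1 := fun a => by
    rw [← sq_le_one_iff_abs_le_one, hsq]; norm_num
  have hWm : ∀ s : Finset ι, Measurable fun P : ι → α => ∑ x ∈ s, g (P x) := fun s =>
    Finset.measurable_sum _ fun x _ => hg.comp (measurable_pi_apply x)
  have hWb : ∀ (s : Finset ι) (P : ι → α), |∑ x ∈ s, g (P x)| ≤ s.card := fun s P => by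
    refine (Finset.abs_sum_le_sum_abs _ _).trans ?_
    refine (Finset.sum_le_sum fun x _ => habs (P x)).trans ?_
    simp
  have hWi : ∀ (s : Finset ι) (k : ℕ),
      Integrable (fun P : ι → α => (∑ x ∈ s, g (P x)) ^ k) (Measure.pi μ) := fun s k => by
    refine integrable_of_bdd _ _ ((hWm s).pow_const k) ((s.card : ℝ) ^ k) fun P => ?_
    rw [abs_pow]
    exact pow_le_pow_left₀ (abs_nonneg _) (hWb s P) k
  have hWgi : ∀ (s : Finset ι) (k : ℕ) (x : ι),
      Integrable (fun P : ι → α => (∑ x ∈ s, g (P x)) ^ k * g (P x)) (Measure.pi μ) :=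
    fun s k x => by
    refine integrable_of_bdd _ _ (((hWm s).pow_const k).mul (hg.comp (measurable_pi_apply x)))
      ((s.card : ℝ) ^ k) fun P => ?_
    rw [abs_mul, abs_pow]
    calc _ ≤ (s.card : ℝ) ^ k * 1 := mul_le_mul (pow_le_pow_left₀ (abs_nonneg _) (hWb s P) k)
            (habs _) (abs_nonneg _) (by positivity)
      _ = _ := mul_one _
  have hWg0 : ∀ (s : Finset ι) (k : ℕ) (x : ι), x ∉ s → ∫ a, g a ∂μ x = 0 →
      ∫ P, (∑ x ∈ s, g (P x)) ^ k * g (P x) ∂Measure.pi μ = 0 := fun s k x hx h => by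
    refine integral_mul_coord_eq_zero μ x _ ((hWm s).pow_const k) (fun P Q hPQ => ?_) g hg h
    congr 1
    refine Finset.sum_congr rfl fun y hy => ?_
    rw [hPQ y (by rintro rfl; exact hx hy)]
  induction s using Finset.induction_on with
  | empty => simp
  | insert x s hx ih =>
    obtain ⟨i1, i2, i4⟩ := ih fun y hy => h0 y (Finset.mem_insert_of_mem hy)
    have hx0 := h0 x (Finset.mem_insert_self _ _)
    have z0 := hWg0 s 0 x hx hx0
    have z1 := hWg0 s 1 x hx hx0
    have z3 := hWg0 s 3 x hx hx0
    have n0 := hWgi s 0 x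
    have n1 := hWgi s 1 x
    have n3 := hWgi s 3 x
    have w1 := hWi s 1
    have w2 := hWi s 2
    have w4 := hWi s 4
    simp only [pow_zero, one_mul, pow_one] at z0 z1 n0 n1 w1
    simp only [Finset.sum_insert hx, Finset.card_insert_of_notMem hx]
    refine ⟨?_, ?_, ?_⟩
    · rw [integral_add n0 w1, z0, i1, add_zero]
    · have e : ∀ P : ι → α, (g (P x) + ∑ x ∈ s, g (P x)) ^ 2 =
          ((∑ x ∈ s, g (P x)) ^ 2 + 2 * ((∑ x ∈ s, g (P x)) * g (P x))) + 1 / 4 := fun P => by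
        rw [← hsq (P x)]; ring
      simp only [e]
      rw [integral_add (w2.fun_add (n1.const_mul 2)) (integrable_const _),
        integral_add w2 (n1.const_mul 2), integral_const_mul, z1, i2]
      simp
      ring
    · have e : ∀ P : ι → α, (g (P x) + ∑ x ∈ s, g (P x)) ^ 4 =
          (((∑ x ∈ s, g (P x)) ^ 4 + 4 * ((∑ x ∈ s, g (P x)) ^ 3 * g (P x))) +
          (1 * ((∑ x ∈ s, g (P x)) * g (P x)) + 3 / 2 * (∑ x ∈ s, g (P x)) ^ 2)) + 1 / 16 :=
        fun P => by
        have h := hsq (P x)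
        generalize g (P x) = u at *
        generalize ∑ x ∈ s, g (P x) = w at *
        have h3 : u ^ 3 = u / 4 := by rw [pow_succ, h]; ring
        have h4 : u ^ 4 = 1 / 16 := by
          have : u ^ 4 = (u ^ 2) ^ 2 := by ring
          rw [this, h]; norm_num
        linear_combination h4 + 4 * w * h3 + 6 * w ^ 2 * h
      simp only [e]
      rw [integral_add ((w4.fun_add (n3.const_mul 4)).fun_add ((n1.const_mul 1).fun_add (w2.const_mul (3/2))))
          (integrable_const _),
        integral_add (w4.fun_add (n3.const_mul 4)) ((n1.const_mul 1).fun_add (w2.const_mul (3/2))),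
        integral_add w4 (n3.const_mul 4), integral_add (n1.const_mul 1) (w2.const_mul (3/2)),
        integral_const_mul, integral_const_mul, integral_const_mul, z1, z3, i2]
      simp
      nlinarith [i4, (Nat.cast_nonneg s.card : (0:ℝ) ≤ s.card)]

/-- Lower bound for the expectation of the positive part. -/
lemma pos_part_lower {ι α : Type*} [Fintype ι] [DecidableEq ι] [MeasurableSpace α]
    [Inhabited α] (μ : ι → Measure α) [∀ i, IsProbabilityMeasure (μ i)]
    (g : α → ℝ) (hg : Measurable g) (hsq : ∀ a, g a ^ 2 = 1 / 4) (s : Finset ι)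
    (h0 : ∀ x ∈ s, ∫ a, g a ∂μ x = 0) (hs : 0 < s.card) :
    √(s.card : ℝ) / 32 ≤ ∫ P, max (∑ x ∈ s, g (P x)) 0 ∂Measure.pi μ := by
  obtain ⟨m1, m2, m4⟩ := moments μ g hg hsq s h0
  have habs : ∀ a, |g a| ≤ 1 := fun a => by
    rw [← sq_le_one_iff_abs_le_one, hsq]; norm_num
  have hWm : Measurable fun P : ι → α => ∑ x ∈ s, g (P x) :=
    Finset.measurable_sum _ fun x _ => hg.comp (measurable_pi_apply x)
  have hWb : ∀ (P : ι → α), |∑ x ∈ s, g (P x)| ≤ s.card := fun P => by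
    refine (Finset.abs_sum_le_sum_abs _ _).trans ?_
    refine (Finset.sum_le_sum fun x _ => habs (P x)).trans ?_
    simp
  have hWi : ∀ (k : ℕ),
      Integrable (fun P : ι → α => (∑ x ∈ s, g (P x)) ^ k) (Measure.pi μ) := fun k => by
    refine integrable_of_bdd _ _ (hWm.pow_const k) ((s.card : ℝ) ^ k) fun P => ?_
    rw [abs_pow]
    exact pow_le_pow_left₀ (abs_nonneg _) (hWb P) k
  have w1 := hWi 1
  simp only [pow_one] at w1
  have w2 := hWi 2
  have w4 := hWi 4
  set r : ℝ := √(s.card : ℝ) with hr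
  have hn : (0 : ℝ) < s.card := by exact_mod_cast hs
  have hrp : 0 < r := Real.sqrt_pos.2 hn
  have hrs : r ^ 2 = s.card := Real.sq_sqrt hn.le
  have key : ∀ w : ℝ, (1 / 2) * w + (1 / (2 * r) * w ^ 2 + (-(1 / (2 * r ^ 3))) * w ^ 4)
      ≤ max w 0 := by
    intro w
    have hmax : max w 0 = (w + |w|) / 2 := by
      rcases le_total w 0 with h | h
      · rw [max_eq_right h, abs_of_nonpos h]; ring
      · rw [max_eq_left h, abs_of_nonneg h]; ring
    rw [hmax]
    have hw2 : w ^ 2 = |w| ^ 2 := (sq_abs w).symm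
    have hw4 : w ^ 4 = |w| ^ 4 := by
      have : w ^ 4 = (w ^ 2) ^ 2 := by ring
      rw [this, hw2]; ring
    rw [hw2, hw4]
    have ht : 0 ≤ |w| := abs_nonneg w
    generalize |w| = t at *
    have : t ^ 2 / r - t ^ 4 / r ^ 3 ≤ t := by
      obtain ⟨u, rfl⟩ : ∃ u, t = r * u := ⟨t / r, by field_simp⟩
      have hu : 0 ≤ u := by
        by_contra hcon
        push Not at hcon
        nlinarith
      have e : (r * u) ^ 2 / r - (r * u) ^ 4 / r ^ 3 = r * (u ^ 2 - u ^ 4) := by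
        field_simp
      rw [e]
      apply mul_le_mul_of_nonneg_left _ hrp.le
      have : u - u ^ 3 ≤ 1 := by
        rcases le_total u 1 with h | h
        · nlinarith [pow_nonneg hu 3]
        · nlinarith [mul_nonneg hu (sub_nonneg.2 h), mul_nonneg (mul_nonneg hu hu) (sub_nonneg.2 h)]
      nlinarith
    have e2 : 1 / 2 * w + (1 / (2 * r) * t ^ 2 + (-(1 / (2 * r ^ 3))) * t ^ 4)
      = (w + (t ^ 2 / r - t ^ 4 / r ^ 3)) / 2 := by
      field_simp
      ring
    rw [e2]
    linarith
  have hmi : Integrable (fun P : ι → α => max (∑ x ∈ s, g (P x)) 0) (Measure.pi μ) := by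
    refine integrable_of_bdd _ _ (hWm.max measurable_const) (s.card : ℝ) fun P => ?_
    rw [abs_of_nonneg (le_max_right _ _)]
    exact max_le ((le_abs_self _).trans (hWb P)) hn.le
  have hfin := integral_mono ((w1.const_mul (1 / 2)).fun_add ((w2.const_mul (1 / (2 * r))).fun_add
    (w4.const_mul (-(1 / (2 * r ^ 3)))))) hmi (fun P => key _)
  refine le_trans ?_ hfin
  rw [integral_add (w1.const_mul (1 / 2)) ((w2.const_mul (1 / (2 * r))).fun_add
    (w4.const_mul (-(1 / (2 * r ^ 3))))), integral_add (w2.const_mul (1 / (2 * r)))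
    (w4.const_mul (-(1 / (2 * r ^ 3)))), integral_const_mul, integral_const_mul,
    integral_const_mul, m1, m2]
  rw [← hrs] at m4 ⊢
  have h5 : 1 / (2 * r ^ 3) * ∫ P, (∑ x ∈ s, g (P x)) ^ 4 ∂Measure.pi μ ≤
      1 / (2 * r ^ 3) * (3 * (r ^ 2) ^ 2 / 16) :=
    mul_le_mul_of_nonneg_left m4 (by positivity)
  have e1 : 1 / (2 * r ^ 3) * (3 * (r ^ 2) ^ 2 / 16) = 3 * r / 32 := by field_simp; ring
  have e2 : 1 / (2 * r) * (r ^ 2 / 4) = r / 8 := by field_simp; ring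
  rw [e1] at h5
  rw [e2]
  linarith

/-- The single point distribution. -/
def jm (m d : ℕ) (x : Fin d → Fin m) : Measure (Fin d → ℝ) :=
  ((m : ENNReal) ^ d) • volume.restrict (jitterCube m d x)

lemma measurableSet_jitterCube (m d : ℕ) (x : Fin d → Fin m) :
    MeasurableSet (jitterCube m d x) :=
  MeasurableSet.univ_pi fun _ => measurableSet_Ico

lemma measurableSet_anchoredBox (d : ℕ) (y : Fin d → ℝ) :
    MeasurableSet (anchoredBox d y) :=
  MeasurableSet.univ_pi fun _ => measurableSet_Ico

lemma volume_jitterCube (m d : ℕ) (x : Fin d → Fin m) :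
    volume (jitterCube m d x) = ENNReal.ofReal (1 / m) ^ d := by
  rw [jitterCube, volume_pi_pi]
  simp [Real.volume_Ico]

lemma ofReal_inv_mul (m : ℕ) (hm : 0 < m) : (m : ENNReal) * ENNReal.ofReal (1 / m) = 1 := by
  rw [← ENNReal.ofReal_natCast, ← ENNReal.ofReal_mul (by positivity)]
  rw [mul_one_div_cancel (by positivity)]
  simp

lemma jm_prob (m d : ℕ) (hm : 0 < m) (x : Fin d → Fin m) : IsProbabilityMeasure (jm m d x) := by
  constructor
  rw [jm, Measure.smul_apply, Measure.restrict_apply_univ, volume_jitterCube, smul_eq_mul,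
    ← mul_pow, ofReal_inv_mul m hm, one_pow]

lemma jm_ae (m d : ℕ) (x : Fin d → Fin m) : ∀ᵐ p ∂(jm m d x), p ∈ jitterCube m d x :=
  Measure.ae_smul_measure (ae_restrict_mem (measurableSet_jitterCube m d x)) _

lemma volume_anchoredBox (d : ℕ) (y : Fin d → ℝ) (hy : ∀ i, 0 ≤ y i) :
    (volume (anchoredBox d y)).toReal = ∏ i, y i := by
  rw [anchoredBox, volume_pi_pi, ENNReal.toReal_prod]
  refine Finset.prod_congr rfl fun i _ => ?_
  rw [Real.volume_Ico, sub_zero, ENNReal.toReal_ofReal (hy i)]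

lemma jm_box_sum (m d : ℕ) (hm : 0 < m) (y : Fin d → ℝ) (hy : ∀ i, y i ∈ Set.Ico (0 : ℝ) 1) :
    (m : ℝ) ^ d * (volume (anchoredBox d y)).toReal =
      ∑ x, (jm m d x (anchoredBox d y)).toReal := by
  have hmR : (0 : ℝ) < m := by exact_mod_cast hm
  have hU : anchoredBox d y = ⋃ x : Fin d → Fin m, anchoredBox d y ∩ jitterCube m d x := by
    ext p
    simp only [Set.mem_iUnion, Set.mem_inter_iff, exists_and_left]
    refine ⟨fun h => ⟨h, ?_⟩, fun h => h.1⟩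
    have hp : ∀ i, 0 ≤ p i ∧ p i < 1 := fun i =>
      ⟨(h i (Set.mem_univ i)).1, (h i (Set.mem_univ i)).2.trans (hy i).2⟩
    have hlt : ∀ i, ⌊p i * m⌋₊ < m := fun i => by
      rw [Nat.floor_lt (mul_nonneg (hp i).1 hmR.le)]
      nlinarith [(hp i).2]
    refine ⟨fun i => ⟨⌊p i * m⌋₊, hlt i⟩, fun i _ => ⟨?_, ?_⟩⟩
    · simp only
      rw [div_le_iff₀ hmR]
      exact Nat.floor_le (mul_nonneg (hp i).1 hmR.le)
    · simp only
      rw [← add_div, lt_div_iff₀ hmR]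
      exact Nat.lt_floor_add_one _
  have hd : Pairwise (Function.onFun Disjoint
      fun x : Fin d → Fin m => anchoredBox d y ∩ jitterCube m d x) := by
    intro x x' hne
    rw [Function.onFun, Set.disjoint_left]
    rintro p ⟨-, hp⟩ ⟨-, hp'⟩
    apply hne
    funext i
    have key : ∀ a b : Fin m, p i ∈ Set.Ico ((a : ℝ) / m) ((a : ℝ) / m + 1 / m) →
        p i ∈ Set.Ico ((b : ℝ) / m) ((b : ℝ) / m + 1 / m) → a ≤ b := by
      intro a b ha hb
      have h := ha.1.trans_lt hb.2
      rw [← add_div, div_lt_div_iff_of_pos_right hmR] at h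
      have h' : (a : ℕ) < (b : ℕ) + 1 := by exact_mod_cast h
      exact Fin.le_def.2 (by omega)
    exact le_antisymm (key _ _ (hp i (Set.mem_univ i)) (hp' i (Set.mem_univ i)))
      (key _ _ (hp' i (Set.mem_univ i)) (hp i (Set.mem_univ i)))
  have hv : volume (anchoredBox d y) =
      ∑ x : Fin d → Fin m, volume (anchoredBox d y ∩ jitterCube m d x) := by
    conv_lhs => rw [hU]
    rw [measure_iUnion hd fun x => (measurableSet_anchoredBox d y).inter
      (measurableSet_jitterCube m d x), tsum_fintype]
  have hfin : ∀ x : Fin d → Fin m, volume (anchoredBox d y ∩ jitterCube m d x) ≠ ⊤ := fun x => by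
    refine ((measure_mono Set.inter_subset_right).trans_lt ?_).ne
    rw [volume_jitterCube]
    exact ENNReal.pow_lt_top ENNReal.ofReal_lt_top
  rw [hv, ENNReal.toReal_sum fun x _ => hfin x, Finset.mul_sum]
  refine Finset.sum_congr rfl fun x _ => ?_
  rw [jm, Measure.smul_apply, Measure.restrict_apply (measurableSet_anchoredBox d y), smul_eq_mul,
    ENNReal.toReal_mul]
  simp

lemma jdisc_eq (m d : ℕ) (hm : 0 < m) (P : (Fin d → Fin m) → (Fin d → ℝ))
    (y : Fin d → ℝ) (hy : ∀ i, y i ∈ Set.Ico (0 : ℝ) 1) :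
    jdisc m d P (anchoredBox d y) = ∑ x, ((anchoredBox d y).indicator (fun _ => (1 : ℝ)) (P x) -
      (jm m d x (anchoredBox d y)).toReal) := by
  classical
  rw [jdisc, jm_box_sum m d hm y hy, Finset.sum_sub_distrib]
  congr 1
  rw [Finset.card_filter]
  push_cast
  refine Finset.sum_congr rfl fun x _ => ?_
  simp [Set.indicator_apply]

lemma abs_jdisc_le (m d : ℕ) (P : (Fin d → Fin m) → (Fin d → ℝ))
    (y : Fin d → ℝ) (hy : ∀ i, y i ∈ Set.Ico (0 : ℝ) 1) :
    |jdisc m d P (anchoredBox d y)| ≤ (m : ℝ) ^ d := by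
  classical
  rw [jdisc, volume_anchoredBox d y fun i => (hy i).1]
  have h1 : ∏ i, y i ≤ 1 := Finset.prod_le_one (fun i _ => (hy i).1) fun i _ => (hy i).2.le
  have h0 : 0 ≤ ∏ i, y i := Finset.prod_nonneg fun i _ => (hy i).1
  have hc : ((Finset.univ.filter fun x => P x ∈ anchoredBox d y).card : ℝ) ≤ (m : ℝ) ^ d := by
    have := Finset.card_le_univ (Finset.univ.filter fun x => P x ∈ anchoredBox d y)
    have h2 : Fintype.card (Fin d → Fin m) = m ^ d := by simp
    rw [h2] at this
    exact_mod_cast this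
  have hmd : (0 : ℝ) ≤ (m : ℝ) ^ d := by positivity
  have hcn : (0 : ℝ) ≤ ((Finset.univ.filter fun x => P x ∈ anchoredBox d y).card : ℝ) :=
    Nat.cast_nonneg _
  have h3 := mul_le_mul_of_nonneg_left h1 hmd
  have h4 := mul_nonneg hmd h0
  rw [abs_le]
  constructor
  · linarith
  · have hc' := hc
    linarith

lemma bdd_starDisc (m d : ℕ) (P : (Fin d → Fin m) → (Fin d → ℝ)) :
    BddAbove (Set.range fun y : {y : Fin d → ℝ // ∀ i, y i ∈ Set.Ico (0 : ℝ) 1} =>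
      |jdisc m d P (anchoredBox d y.1)|) := by
  refine ⟨(m : ℝ) ^ d, ?_⟩
  rintro _ ⟨y, rfl⟩
  exact abs_jdisc_le m d P y.1 y.2

/-- Approximation of the discrepancy of a box by those of rational boxes. -/
lemma exists_rat_seq (m d : ℕ) (P : (Fin d → Fin m) → (Fin d → ℝ))
    (y : Fin d → ℝ) (hy : ∀ i, y i ∈ Set.Ico (0 : ℝ) 1) (hpos : ∀ i, 0 < y i) :
    ∃ u : ℕ → {q : Fin d → ℚ // ∀ i, (q i : ℝ) ∈ Set.Ico (0 : ℝ) 1},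
      Filter.Tendsto (fun n => |jdisc m d P (anchoredBox d fun i => ((u n).1 i : ℝ))|)
        Filter.atTop (nhds |jdisc m d P (anchoredBox d y)|) := by
  classical
  have h : ∀ (n : ℕ) (i : Fin d), ∃ q : ℚ, max 0 (y i - 1 / ((n : ℝ) + 1)) < q ∧ (q : ℝ) < y i := by
    intro n i
    refine exists_rat_btwn (max_lt (hpos i) ?_)
    have : (0 : ℝ) < 1 / ((n : ℝ) + 1) := by positivity
    linarith
  choose u hu1 hu2 using h
  have hu0 : ∀ n i, (u n i : ℝ) ∈ Set.Ico (0 : ℝ) 1 := fun n i =>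
    ⟨(le_max_left _ _).trans (hu1 n i).le, (hu2 n i).trans (hy i).2⟩
  have hlim : ∀ i, Filter.Tendsto (fun n => (u n i : ℝ)) Filter.atTop (nhds (y i)) := by
    intro i
    refine tendsto_of_tendsto_of_tendsto_of_le_of_le (g := fun n : ℕ => y i - 1 / ((n : ℝ) + 1))
      (h := fun _ => y i) ?_ tendsto_const_nhds
      (fun n => (le_max_right _ _).trans (hu1 n i).le) (fun n => (hu2 n i).le)
    simpa using tendsto_const_nhds.sub (tendsto_one_div_add_atTop_nhds_zero_nat (𝕜 := ℝ))
  refine ⟨fun n => ⟨u n, hu0 n⟩, ?_⟩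
  refine Filter.Tendsto.abs ?_
  simp only [jdisc]
  refine Filter.Tendsto.sub ?_ ?_
  · apply tendsto_const_nhds.congr'
    have hev : ∀ᶠ n in Filter.atTop, ∀ x : Fin d → Fin m, ∀ i, P x i < y i → P x i < u n i := by
      rw [Filter.eventually_all]
      intro x
      rw [Filter.eventually_all]
      intro i
      by_cases hx : P x i < y i
      · filter_upwards [(hlim i).eventually_const_lt hx] with n hn _ using hn
      · exact Filter.Eventually.of_forall fun n hn => absurd hn hx
    filter_upwards [hev] with n hn
    congr 2
    ext x
    simp only [Finset.mem_filter, Finset.mem_univ, true_and, anchoredBox, Set.mem_pi, Set.mem_univ,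
      forall_true_left, Set.mem_Ico]
    exact ⟨fun h i => ⟨(h i).1, hn x i (h i).2⟩, fun h i => ⟨(h i).1, (h i).2.trans (hu2 n i)⟩⟩
  · refine Filter.Tendsto.const_mul _ ?_
    rw [volume_anchoredBox d y fun i => (hy i).1]
    have : ∀ n, (volume (anchoredBox d fun i => (u n i : ℝ))).toReal = ∏ i, (u n i : ℝ) :=
      fun n => volume_anchoredBox d _ fun i => (hu0 n i).1
    simp only [this]
    exact tendsto_finsetProd _ fun i _ => hlim i

lemma starDisc_eq_rat (m d : ℕ) (P : (Fin d → Fin m) → (Fin d → ℝ)) :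
    starDisc m d P = ⨆ q : {q : Fin d → ℚ // ∀ i, (q i : ℝ) ∈ Set.Ico (0 : ℝ) 1},
      |jdisc m d P (anchoredBox d fun i => (q.1 i : ℝ))| := by
  have hb : BddAbove (Set.range fun q : {q : Fin d → ℚ // ∀ i, (q i : ℝ) ∈ Set.Ico (0 : ℝ) 1} =>
      |jdisc m d P (anchoredBox d fun i => (q.1 i : ℝ))|) := by
    refine ⟨(m : ℝ) ^ d, ?_⟩
    rintro _ ⟨y, rfl⟩
    exact abs_jdisc_le m d P _ y.2
  apply le_antisymm
  · refine Real.iSup_le (fun y => ?_) (Real.iSup_nonneg fun q => abs_nonneg _)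
    by_cases hpos : ∀ i, 0 < y.1 i
    · obtain ⟨u, hu⟩ := exists_rat_seq m d P y.1 y.2 hpos
      exact le_of_tendsto' hu fun n => le_ciSup hb (u n)
    · push Not at hpos
      obtain ⟨i, hi⟩ := hpos
      have he : anchoredBox d y.1 = ∅ := by
        apply Set.eq_empty_of_forall_notMem
        intro p hp
        have := hp i (Set.mem_univ i)
        exact absurd (this.1.trans_lt this.2) (not_lt.2 hi)
      rw [he]
      simp only [jdisc, Set.mem_empty_iff_false, Finset.filter_false, Finset.card_empty,
        measure_empty]
      simpa using Real.iSup_nonneg fun q => abs_nonneg _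
  · refine Real.iSup_le (fun q => ?_) (Real.iSup_nonneg fun q => abs_nonneg _)
    exact le_ciSup (bdd_starDisc m d P) ⟨fun i => (q.1 i : ℝ), q.2⟩

lemma measurable_jdisc (m d : ℕ) (A : Set (Fin d → ℝ)) (hA : MeasurableSet A) :
    Measurable fun P : (Fin d → Fin m) → (Fin d → ℝ) => jdisc m d P A := by
  classical
  have : (fun P : (Fin d → Fin m) → (Fin d → ℝ) => jdisc m d P A) = fun P =>
      (∑ x, A.indicator (fun _ => (1 : ℝ)) (P x)) - (m : ℝ) ^ d * (volume A).toReal := by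
    funext P
    rw [jdisc, Finset.card_filter]
    push_cast
    congr 1
  rw [this]
  exact (Finset.measurable_sum _ fun x _ =>
    (measurable_const.indicator hA).comp (measurable_pi_apply x)).sub measurable_const

lemma measurable_starDisc (m d : ℕ) :
    Measurable fun P : (Fin d → Fin m) → (Fin d → ℝ) => starDisc m d P := by
  simp only [starDisc_eq_rat]
  refine Measurable.iSup fun q => ?_
  exact (measurable_jdisc m d _ (measurableSet_anchoredBox d _)).abs

lemma starDisc_nonneg (m d : ℕ) (P : (Fin d → Fin m) → (Fin d → ℝ)) : 0 ≤ starDisc m d P :=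
  Real.iSup_nonneg fun _ => abs_nonneg _

lemma starDisc_le (m d : ℕ) (P : (Fin d → Fin m) → (Fin d → ℝ)) :
    starDisc m d P ≤ (m : ℝ) ^ d :=
  Real.iSup_le (fun y => abs_jdisc_le m d P y.1 y.2) (by positivity)

lemma jdisc_le_starDisc (m d : ℕ) (P : (Fin d → Fin m) → (Fin d → ℝ))
    (y : Fin d → ℝ) (hy : ∀ i, y i ∈ Set.Ico (0 : ℝ) 1) :
    jdisc m d P (anchoredBox d y) ≤ starDisc m d P :=
  (le_abs_self _).trans (le_ciSup (bdd_starDisc m d P) ⟨y, hy⟩)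

/-- Upper corner of the box belonging to the set `S` of selected coordinates. -/
def cornerS (m d : ℕ) (S : Finset (Fin d)) (i : Fin d) : ℝ :=
  if i ∈ S then 1 - 1 / (2 * m) else 1 - 1 / m

/-- Cubes lying in the last layer in direction `i` and in no other last layer. -/
def layerT (m d : ℕ) (i : Fin d) : Finset (Fin d → Fin m) :=
  Fintype.piFinset fun j =>
    if j = i then Finset.univ.filter (fun a : Fin m => (a : ℕ) + 1 = m)
    else Finset.univ.filter (fun a : Fin m => (a : ℕ) + 1 ≠ m)

/-- Centred indicator of lying in the lower half of the last layer in direction `i`. -/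
def halfSign (m d : ℕ) (i : Fin d) (p : Fin d → ℝ) : ℝ :=
  if p i < 1 - 1 / (2 * m) then 1 / 2 else -(1 / 2)

lemma mem_layerT (m d : ℕ) (i : Fin d) (x : Fin d → Fin m) :
    x ∈ layerT m d i ↔ ∀ j, ((x j : ℕ) + 1 = m ↔ j = i) := by
  simp only [layerT, Fintype.mem_piFinset]
  refine forall_congr' fun j => ?_
  by_cases h : j = i <;> simp [h]

lemma card_layerT (m d : ℕ) (hm : 0 < m) (i : Fin d) :
    (layerT m d i).card = (m - 1) ^ (d - 1) := by
  have h1 : (Finset.univ.filter (fun a : Fin m => (a : ℕ) + 1 = m)).card = 1 := by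
    rw [Finset.card_eq_one]
    refine ⟨⟨m - 1, by omega⟩, ?_⟩
    ext a
    simp only [Finset.mem_filter, Finset.mem_univ, true_and, Finset.mem_singleton, Fin.ext_iff]
    omega
  have h2 : (Finset.univ.filter (fun a : Fin m => (a : ℕ) + 1 ≠ m)).card = m - 1 := by
    have := Finset.card_filter_add_card_filter_not (s := (Finset.univ : Finset (Fin m)))
      (fun a : Fin m => (a : ℕ) + 1 = m)
    rw [h1, Finset.card_univ, Fintype.card_fin] at this
    simp only [ne_eq]
    omega
  rw [layerT, Fintype.card_piFinset, ← Finset.mul_prod_erase _ _ (Finset.mem_univ i)]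
  rw [if_pos rfl, h1, one_mul, Finset.prod_congr rfl (g := fun _ => m - 1)]
  · rw [Finset.prod_const, Finset.card_erase_of_mem (Finset.mem_univ i), Finset.card_univ,
      Fintype.card_fin]
  · intro j hj
    rw [if_neg (Finset.ne_of_mem_erase hj), h2]

lemma measurable_halfSign (m d : ℕ) (i : Fin d) : Measurable (halfSign m d i) :=
  Measurable.ite (measurableSet_lt (measurable_pi_apply i) measurable_const)
    measurable_const measurable_const

lemma halfSign_sq (m d : ℕ) (i : Fin d) (p : Fin d → ℝ) : halfSign m d i p ^ 2 = 1 / 4 := by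
  rw [halfSign]; split_ifs <;> norm_num

lemma halfSign_abs (m d : ℕ) (i : Fin d) (p : Fin d → ℝ) : |halfSign m d i p| ≤ 1 := by
  rw [← sq_le_one_iff_abs_le_one, halfSign_sq]; norm_num

lemma cornerS_mem (m d : ℕ) (hm : 2 ≤ m) (S : Finset (Fin d)) (i : Fin d) :
    cornerS m d S i ∈ Set.Ico (0 : ℝ) 1 := by
  have hmR : (2 : ℝ) ≤ m := by exact_mod_cast hm
  have h1 : (0 : ℝ) < 1 / m := by positivity
  have h2 : (1 : ℝ) / m ≤ 1 := by rw [div_le_one (by positivity)]; linarith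
  have h3 : (1 : ℝ) / (2 * m) = 1 / m / 2 := by field_simp
  rw [cornerS, h3]
  split_ifs <;> constructor <;> linarith

lemma jm_real_half (m d : ℕ) (hm : 2 ≤ m) (i : Fin d) (x : Fin d → Fin m)
    (hx : (x i : ℕ) + 1 = m) :
    (jm m d x {p | p i < 1 - 1 / (2 * (m : ℝ))}).toReal = 1 / 2 := by
  have hmR : (0 : ℝ) < m := by
    have : (2 : ℝ) ≤ m := by exact_mod_cast hm
    linarith
  have hxR : (x i : ℝ) = m - 1 := by
    have : ((x i : ℕ) : ℝ) + 1 = m := by exact_mod_cast hx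
    linarith
  have hA : MeasurableSet {p : Fin d → ℝ | p i < 1 - 1 / (2 * (m : ℝ))} :=
    measurableSet_lt (measurable_pi_apply i) measurable_const
  have hset : {p : Fin d → ℝ | p i < 1 - 1 / (2 * (m : ℝ))} ∩ jitterCube m d x =
      Set.univ.pi fun j => Set.Ico ((x j : ℝ) / m)
        ((x j : ℝ) / m + (1 / m) * (if j = i then 1 / 2 else 1)) := by
    have e1 : (x i : ℝ) / m + (1 / m) * (1 / 2) = 1 - 1 / (2 * (m : ℝ)) := by
      rw [hxR]; field_simp; ring
    have e2 : 1 - 1 / (2 * (m : ℝ)) ≤ (x i : ℝ) / m + 1 / m := by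
      rw [← e1]
      have : (0 : ℝ) < 1 / m := by positivity
      linarith
    ext p
    simp only [Set.mem_inter_iff, Set.mem_ofPred_eq, jitterCube, Set.mem_pi, Set.mem_univ,
      forall_true_left, Set.mem_Ico]
    constructor
    · rintro ⟨h1, h2⟩ j
      refine ⟨(h2 j).1, ?_⟩
      by_cases hj : j = i
      · subst hj
        rw [if_pos rfl, e1]; exact h1
      · rw [if_neg hj, mul_one]; exact (h2 j).2
    · intro h
      have hi := (h i).2
      rw [if_pos rfl, e1] at hi
      refine ⟨hi, fun j => ⟨(h j).1, ?_⟩⟩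
      by_cases hj : j = i
      · subst hj
        exact hi.trans_le e2
      · have := (h j).2
        rwa [if_neg hj, mul_one] at this
  rw [jm, Measure.smul_apply, Measure.restrict_apply hA, hset, volume_pi_pi, smul_eq_mul,
    ENNReal.toReal_mul, ENNReal.toReal_prod]
  have : ∀ j, (volume (Set.Ico ((x j : ℝ) / m)
        ((x j : ℝ) / m + (1 / m) * (if j = i then 1 / 2 else 1)))).toReal =
        (1 / m) * (if j = i then 1 / 2 else 1) := fun j => by
    rw [Real.volume_Ico, add_sub_cancel_left, ENNReal.toReal_ofReal]
    split_ifs <;> positivity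
  simp only [this]
  rw [Finset.prod_mul_distrib, Finset.prod_ite_eq' Finset.univ i]
  simp only [Finset.mem_univ, if_true, Finset.prod_const, Finset.card_univ, Fintype.card_fin]
  rw [← mul_assoc]
  simp only [ENNReal.toReal_pow, ENNReal.toReal_natCast]
  rw [← mul_pow, mul_one_div_cancel hmR.ne', one_pow, one_mul]

lemma halfSign_mean (m d : ℕ) (hm : 2 ≤ m) (i : Fin d) (x : Fin d → Fin m)
    (hx : (x i : ℕ) + 1 = m) : ∫ p, halfSign m d i p ∂(jm m d x) = 0 := by
  have := jm_prob m d (by omega) x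
  have hA : MeasurableSet {p : Fin d → ℝ | p i < 1 - 1 / (2 * (m : ℝ))} :=
    measurableSet_lt (measurable_pi_apply i) measurable_const
  have e : ∀ p, halfSign m d i p =
      {p : Fin d → ℝ | p i < 1 - 1 / (2 * (m : ℝ))}.indicator (fun _ => (1 : ℝ)) p - 1 / 2 := by
    intro p
    rw [halfSign, Set.indicator_apply]
    simp only [Set.mem_ofPred_eq]
    split_ifs <;> norm_num
  simp only [e]
  rw [integral_sub ((integrable_const _).indicator hA) (integrable_const _),
    integral_indicator_const _ hA, measureReal_def, jm_real_half m d hm i x hx]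
  simp

lemma indicator_box (m d : ℕ) (hm : 2 ≤ m) (i : Fin d) (x : Fin d → Fin m)
    (hx : x ∈ layerT m d i) (S : Finset (Fin d)) (p : Fin d → ℝ) (hp : p ∈ jitterCube m d x) :
    (anchoredBox d (cornerS m d S)).indicator (fun _ => (1 : ℝ)) p =
      if i ∈ S then halfSign m d i p + 1 / 2 else 0 := by
  have hmR : (0 : ℝ) < m := by
    have : (2 : ℝ) ≤ m := by exact_mod_cast hm
    linarith
  rw [mem_layerT] at hx
  have hxi : (x i : ℝ) = m - 1 := by
    have : ((x i : ℕ) : ℝ) + 1 = m := by exact_mod_cast (hx i).2 rfl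
    linarith
  have hp' : ∀ j, (x j : ℝ) / m ≤ p j ∧ p j < (x j : ℝ) / m + 1 / m := fun j =>
    hp j (Set.mem_univ j)
  have h1m : (0 : ℝ) < 1 / m := by positivity
  have h3 : (1 : ℝ) / (2 * m) = 1 / m / 2 := by field_simp
  have hmem : p ∈ anchoredBox d (cornerS m d S) ↔ (i ∈ S ∧ p i < 1 - 1 / (2 * m)) := by
    simp only [anchoredBox, Set.mem_pi, Set.mem_univ, forall_true_left, Set.mem_Ico]
    constructor
    · intro h
      have hi := (h i).2
      by_cases hS : i ∈ S
      · rw [cornerS, if_pos hS] at hi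
        exact ⟨hS, hi⟩
      · rw [cornerS, if_neg hS] at hi
        have := (hp' i).1
        rw [hxi, sub_div, div_self hmR.ne'] at this
        linarith
    · rintro ⟨hS, hi⟩ j
      refine ⟨le_trans (by positivity) (hp' j).1, ?_⟩
      by_cases hj : j = i
      · subst hj
        rw [cornerS, if_pos hS]; exact hi
      · have hne : (x j : ℕ) + 1 ≠ m := fun h => hj ((hx j).1 h)
        have hlt : (x j : ℕ) + 1 + 1 ≤ m := by
          have := (x j).2
          omega
        have hltR : (x j : ℝ) + 1 ≤ m - 1 := by
          have : ((x j : ℕ) : ℝ) + 1 + 1 ≤ m := by exact_mod_cast hlt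
          linarith
        have h5 : p j < 1 - 1 / m := by
          refine (hp' j).2.trans_le ?_
          rw [← add_div]
          have : (1 : ℝ) - 1 / m = (m - 1) / m := by field_simp
          rw [this]
          exact div_le_div_of_nonneg_right hltR hmR.le
        rw [cornerS]
        split_ifs
        · rw [h3]; linarith
        · exact h5
  classical
  rw [Set.indicator_apply, halfSign]
  simp only [hmem]
  by_cases hS : i ∈ S <;> by_cases h : p i < 1 - 1 / (2 * (m : ℝ)) <;>
    simp only [hS, h, and_true, and_false, if_true, if_false] <;> norm_num

/-- The centred contribution of one cube. -/
def cubeTerm (m d : ℕ) (x : Fin d → Fin m) (S : Finset (Fin d)) (p : Fin d → ℝ) : ℝ :=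
  (anchoredBox d (cornerS m d S)).indicator (fun _ => (1 : ℝ)) p -
      (jm m d x (anchoredBox d (cornerS m d S))).toReal

lemma measurable_cubeTerm (m d : ℕ) (x : Fin d → Fin m) (S : Finset (Fin d)) :
    Measurable (cubeTerm m d x S) :=
  (measurable_const.indicator (measurableSet_anchoredBox d _)).sub measurable_const

lemma cubeTerm_abs (m d : ℕ) (hm : 0 < m) (x : Fin d → Fin m) (S : Finset (Fin d))
    (p : Fin d → ℝ) : |cubeTerm m d x S p| ≤ 1 := by
  have := jm_prob m d hm x
  have h1 : (jm m d x (anchoredBox d (cornerS m d S))).toReal ≤ 1 := by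
    have := measureReal_le_one (μ := jm m d x) (s := anchoredBox d (cornerS m d S))
    rwa [measureReal_def] at this
  have h0 : 0 ≤ (jm m d x (anchoredBox d (cornerS m d S))).toReal := ENNReal.toReal_nonneg
  classical
  rw [cubeTerm, abs_le, Set.indicator_apply]
  split_ifs <;> constructor <;> linarith

lemma cubeTerm_mean (m d : ℕ) (hm : 0 < m) (x : Fin d → Fin m) (S : Finset (Fin d)) :
    ∫ p, cubeTerm m d x S p ∂(jm m d x) = 0 := by
  have := jm_prob m d hm x
  have hA := measurableSet_anchoredBox d (cornerS m d S)
  simp only [cubeTerm]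
  rw [integral_sub ((integrable_const _).indicator hA) (integrable_const _),
    integral_indicator_const _ hA, measureReal_def]
  simp

lemma cubeTerm_layer (m d : ℕ) (hm : 2 ≤ m) (i : Fin d) (x : Fin d → Fin m)
    (hx : x ∈ layerT m d i) (S : Finset (Fin d)) (p : Fin d → ℝ) (hp : p ∈ jitterCube m d x) :
    cubeTerm m d x S p = if i ∈ S then halfSign m d i p else 0 := by
  have := jm_prob m d (by omega) x
  have hA := measurableSet_anchoredBox d (cornerS m d S)
  have hv : (jm m d x (anchoredBox d (cornerS m d S))).toReal = if i ∈ S then 1 / 2 else 0 := by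
    have h1 : ∫ p, (anchoredBox d (cornerS m d S)).indicator (fun _ => (1 : ℝ)) p ∂(jm m d x) =
        (jm m d x (anchoredBox d (cornerS m d S))).toReal := by
      rw [integral_indicator_const _ hA, measureReal_def]; simp
    rw [← h1]
    have h2 : ∫ p, (anchoredBox d (cornerS m d S)).indicator (fun _ => (1 : ℝ)) p ∂(jm m d x) =
        ∫ p, (if i ∈ S then halfSign m d i p + 1 / 2 else 0) ∂(jm m d x) := by
      apply integral_congr_ae
      filter_upwards [jm_ae m d x] with p hp
      exact indicator_box m d hm i x hx S p hp
    rw [h2]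
    by_cases hS : i ∈ S
    · simp only [hS, if_true]
      rw [integral_add (integrable_of_bdd _ _ (measurable_halfSign m d i) 1 (halfSign_abs m d i))
        (integrable_const _), halfSign_mean m d hm i x (((mem_layerT m d i x).1 hx i).2 rfl)]
      simp
    · simp [hS]
  rw [cubeTerm, hv, indicator_box m d hm i x hx S p hp]
  split_ifs <;> ring

/-- Discrepancy inside the layer `layerT`. -/
def layerW (m d : ℕ) (i : Fin d) (P : (Fin d → Fin m) → (Fin d → ℝ)) : ℝ :=
  ∑ x ∈ layerT m d i, halfSign m d i (P x)

open scoped Classical in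
/-- The set of selected coordinates. -/
def selS (m d : ℕ) (P : (Fin d → Fin m) → (Fin d → ℝ)) : Finset (Fin d) :=
  Finset.univ.filter fun i => 0 < layerW m d i P

lemma measurable_layerW (m d : ℕ) (i : Fin d) : Measurable (layerW m d i) :=
  Finset.measurable_sum _ fun x _ => (measurable_halfSign m d i).comp (measurable_pi_apply x)

lemma measurableSet_selS (m d : ℕ) (S : Finset (Fin d)) :
    MeasurableSet {P : (Fin d → Fin m) → (Fin d → ℝ) | selS m d P = S} := by
  have : {P : (Fin d → Fin m) → (Fin d → ℝ) | selS m d P = S} =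
      ⋂ i, {P | 0 < layerW m d i P ↔ i ∈ S} := by
    ext P
    simp [selS, Finset.ext_iff]
  rw [this]
  refine MeasurableSet.iInter fun i => ?_
  have h : MeasurableSet {P | 0 < layerW m d i P} :=
    measurableSet_lt measurable_const (measurable_layerW m d i)
  by_cases hi : i ∈ S
  · simpa [hi] using h
  · simp only [hi, iff_false]
    exact h.compl

lemma term_decomp (m d : ℕ) (x : Fin d → Fin m) (P : (Fin d → Fin m) → (Fin d → ℝ)) :
    cubeTerm m d x (selS m d P) (P x) =
      ∑ S, ({P | selS m d P = S}.indicator (fun _ => (1 : ℝ)) P) * cubeTerm m d x S (P x) := by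
  rw [Finset.sum_eq_single (selS m d P)]
  · simp
  · intro S _ hS
    rw [Set.indicator_of_notMem, zero_mul]
    exact fun h => hS h.symm
  · simp

lemma measurable_term (m d : ℕ) (x : Fin d → Fin m) :
    Measurable fun P : (Fin d → Fin m) → (Fin d → ℝ) => cubeTerm m d x (selS m d P) (P x) := by
  simp only [term_decomp]
  exact Finset.measurable_sum _ fun S _ =>
    (measurable_const.indicator (measurableSet_selS m d S)).mul
      ((measurable_cubeTerm m d x S).comp (measurable_pi_apply x))

lemma term_zero (m d : ℕ) (hm : 0 < m) (x : Fin d → Fin m) (hx : ∀ i, x ∉ layerT m d i) :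
    ∫ P, cubeTerm m d x (selS m d P) (P x) ∂(Measure.pi (jm m d)) = 0 := by
  have := jm_prob m d hm
  simp only [term_decomp]
  rw [integral_finsetSum]
  · refine Finset.sum_eq_zero fun S _ => ?_
    refine integral_mul_coord_eq_zero (jm m d) x _
      (measurable_const.indicator (measurableSet_selS m d S)) ?_ _ (measurable_cubeTerm m d x S)
      (cubeTerm_mean m d hm x S)
    intro P Q hPQ
    have hW : ∀ i, layerW m d i P = layerW m d i Q := fun i => by
      refine Finset.sum_congr rfl fun y hy => ?_
      rw [hPQ y (by rintro rfl; exact hx i hy)]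
    have hS : selS m d P = selS m d Q := by simp only [selS, hW]
    simp only [Set.indicator_apply, Set.mem_ofPred_eq, hS]
  · intro S _
    refine integrable_of_bdd _ _ ((measurable_const.indicator (measurableSet_selS m d S)).mul
      ((measurable_cubeTerm m d x S).comp (measurable_pi_apply x))) 1 fun P => ?_
    rw [abs_mul]
    refine mul_le_one₀ ?_ (abs_nonneg _) (cubeTerm_abs m d hm x S _)
    rw [Set.indicator_apply]
    split_ifs <;> simp

lemma lower_main (m d : ℕ) (hm : 2 ≤ m) :
    d * (√(((m - 1) ^ (d - 1) : ℕ) : ℝ) / 32) ≤ expStarDisc m d := by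
  have hm0 : 0 < m := by omega
  have := jm_prob m d hm0
  have hE : expStarDisc m d = ∫ P, starDisc m d P ∂(Measure.pi (jm m d)) := rfl
  have hti : ∀ x, Integrable (fun P : (Fin d → Fin m) → (Fin d → ℝ) =>
      cubeTerm m d x (selS m d P) (P x)) (Measure.pi (jm m d)) := fun x =>
    integrable_of_bdd _ _ (measurable_term m d x) 1 fun P => cubeTerm_abs m d hm0 x _ _
  have h1 : ∫ P, ∑ x, cubeTerm m d x (selS m d P) (P x) ∂(Measure.pi (jm m d)) ≤
      expStarDisc m d := by
    rw [hE]
    refine integral_mono (integrable_finsetSum _ fun x _ => hti x) ?_ ?_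
    · refine integrable_of_bdd _ _ (measurable_starDisc m d) ((m : ℝ) ^ d) fun P => ?_
      rw [abs_of_nonneg (starDisc_nonneg m d P)]
      exact starDisc_le m d P
    · intro P
      have := jdisc_le_starDisc m d P (cornerS m d (selS m d P)) (cornerS_mem m d hm _)
      rw [jdisc_eq m d hm0 P _ (cornerS_mem m d hm _)] at this
      exact this
  refine le_trans ?_ h1
  rw [integral_finsetSum _ fun x _ => hti x]
  have hdisj : Set.PairwiseDisjoint (↑(Finset.univ : Finset (Fin d))) (layerT m d) := by
    intro i _ j _ hij
    rw [Function.onFun, Finset.disjoint_left]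
    intro x hx hx'
    rw [mem_layerT] at hx hx'
    exact hij ((hx' i).1 ((hx i).2 rfl))
  rw [← Finset.sum_subset (Finset.subset_univ (Finset.univ.biUnion (layerT m d)))
    (fun x _ hx => term_zero m d hm0 x fun i hi => hx (Finset.mem_biUnion.2
      ⟨i, Finset.mem_univ i, hi⟩)), Finset.sum_biUnion hdisj]
  have h2 : ∀ i : Fin d, √(((m - 1) ^ (d - 1) : ℕ) : ℝ) / 32 ≤
      ∑ x ∈ layerT m d i, ∫ P, cubeTerm m d x (selS m d P) (P x) ∂(Measure.pi (jm m d)) := by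
    intro i
    rw [← integral_finsetSum _ fun x _ => hti x]
    have h3 := pos_part_lower (jm m d) (halfSign m d i) (measurable_halfSign m d i)
      (halfSign_sq m d i) (layerT m d i)
      (fun x hx => halfSign_mean m d hm i x (((mem_layerT m d i x).1 hx i).2 rfl))
      (by rw [card_layerT m d hm0]; exact pow_pos (by omega) _)
    rw [card_layerT m d hm0] at h3
    refine h3.trans (le_of_eq ?_)
    apply integral_congr_ae
    have hae : ∀ᵐ P ∂(Measure.pi (jm m d)), ∀ x, P x ∈ jitterCube m d x := by
      rw [ae_all_iff]
      intro x
      exact (Measure.quasiMeasurePreserving_eval (jm m d) x).ae (jm_ae m d x)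
    filter_upwards [hae] with P hP
    rw [Finset.sum_congr rfl fun x hx => cubeTerm_layer m d hm i x hx (selS m d P) (P x) (hP x)]
    have hsel : i ∈ selS m d P ↔ 0 < ∑ x ∈ layerT m d i, halfSign m d i (P x) := by
      simp only [selS, Finset.mem_filter, Finset.mem_univ, true_and]
      rfl
    by_cases hi : i ∈ selS m d P
    · simp only [hi, if_true]
      exact max_eq_left (hsel.1 hi).le
    · simp only [hi, if_false, Finset.sum_const_zero]
      exact max_eq_right (not_lt.1 fun h => hi (hsel.2 h))
  calc _ = ∑ _i : Fin d, √(((m - 1) ^ (d - 1) : ℕ) : ℝ) / 32 := by simp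
    _ ≤ _ := Finset.sum_le_sum fun i _ => h2 i

lemma sqrt_bound (γ : ℝ) (hγ : 0 < γ) (m d : ℕ) (hm : 2 ≤ m) (hd : 2 ≤ d) (h : γ * d ≤ m) :
    Real.exp (-(1 / γ)) * (m : ℝ) ^ (((d : ℝ) - 1) / 2) ≤ √(((m - 1) ^ (d - 1) : ℕ) : ℝ) := by
  have hmR : (2 : ℝ) ≤ m := by exact_mod_cast hm
  have hm0 : (0 : ℝ) < m := by linarith
  apply Real.le_sqrt_of_sq_le
  have e1 : ((m : ℝ) ^ (((d : ℝ) - 1) / 2)) ^ 2 = (m : ℝ) ^ (d - 1) := by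
    rw [← Real.rpow_natCast, ← Real.rpow_mul hm0.le, ← Real.rpow_natCast]
    congr 1
    rw [Nat.cast_sub (by omega)]
    push_cast
    ring
  rw [mul_pow, e1]
  push_cast [Nat.cast_sub (show 1 ≤ m by omega)]
  have h1 : Real.exp (-(2 / m)) * m ≤ (m : ℝ) - 1 := by
    rw [Real.exp_neg, inv_mul_le_iff₀ (Real.exp_pos _)]
    have h2 : 2 / (m : ℝ) + 1 ≤ Real.exp (2 / m) := Real.add_one_le_exp _
    have h3 : (m : ℝ) ≤ (2 / m + 1) * (m - 1) := by
      have : (2 / (m : ℝ) + 1) * (m - 1) = m + (1 - 2 / m) := by field_simp; ring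
      rw [this]
      have : 2 / (m : ℝ) ≤ 1 := by rw [div_le_one hm0]; exact hmR
      linarith
    exact h3.trans (mul_le_mul_of_nonneg_right h2 (by linarith))
  have h2 := pow_le_pow_left₀ (by positivity) h1 (d - 1)
  refine le_trans ?_ h2
  rw [mul_pow]
  apply mul_le_mul_of_nonneg_right _ (by positivity)
  rw [← Real.exp_nat_mul, ← Real.exp_nat_mul]
  apply Real.exp_le_exp.2
  rw [Nat.cast_sub (by omega)]
  push_cast
  have h4 : (d : ℝ) / m ≤ 1 / γ := by
    rw [div_le_div_iff₀ hm0 hγ]; linarith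
  have h5 : 0 < 1 / (m : ℝ) := by positivity
  have h6 : ((d : ℝ) - 1) * -(2 / m) = -2 * ((d : ℝ) / m) + 2 * (1 / m) := by field_simp; ring
  rw [h6]
  linarith

/-- For every constant `γ > 0` there is a constant `C > 0` (depending only on `γ`) such that for
all integers `m, d ≥ 2` with `m ≥ γ·d`, a jittered sampling point set of `N = m^d` points
in `[0,1)^d` satisfies `E[D*(P)] ≥ C·d·m^((d−1)/2)`. -/
theorem jittered_sampling_lower_bound_linear_ratio (γ : ℝ) (hγ : 0 < γ) :
    ∃ C : ℝ, 0 < C ∧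
      ∀ m d : ℕ, 2 ≤ m → 2 ≤ d → γ * d ≤ m →
        C * d * (m : ℝ) ^ (((d : ℝ) - 1) / 2) ≤ expStarDisc m d := by
  refine ⟨Real.exp (-(1 / γ)) / 32, by positivity, fun m d hm hd h => ?_⟩
  refine le_trans ?_ (lower_main m d hm)
  have h1 := sqrt_bound γ hγ m d hm hd h
  have h2 := mul_le_mul_of_nonneg_left h1 (Nat.cast_nonneg d : (0 : ℝ) ≤ d)
  have e : Real.exp (-(1 / γ)) / 32 * d * (m : ℝ) ^ (((d : ℝ) - 1) / 2) =
    (d * (Real.exp (-(1 / γ)) * (m : ℝ) ^ (((d : ℝ) - 1) / 2))) / 32 := by ring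
  rw [e]
  linarith
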